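/- Let a, b, m, n be positive integers with a·m − b·n ∈ {−1, 1}. Let ρ > 0, let g be holomorphic and nowhere vanishing on D(0,ρ) \ {0} ⊆ ℂ (g may vanish at 0), and let f be holomorphic on D(0,ρ) \ {0} with z ↦ z^r·f(z) extending holomorphically to D(0,ρ) for some nonnegative integer r. Fix r' > 0 with (r')^(n+m) < ρ and set U* = {(x,y) ∈ ℂ² : 0 < |x| < r', 0 < |y| < r'}. On N = ℂ² × U* ⊆ ℂ⁴ define the vector fields X̄(t,s,x,y) = (1, 0, x^a·y^b·m·x, −x^a·y^b·n·y) and Ȳ(t,s,x,y) = (0, 1, g(x^n·y^m)·x·(−b·m + x^a·y^b·f(x^n·y^m)), g(x^n·y^m)·y·(a·m − (n/m)·x^a·y^b·f(x^n·y^m))). Let ~ be the leaf equivalence relation on N determined (over ℂ) by X̄ and Ȳ. Then the quotient topological space N/~ is Hausdorff. -/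

import Mathlib

open Set Metric

/-- One step of Palais' leaf relation over `ℂ`: `p` and `q` are joined by a differentiable
path in `N` whose velocity at each time lies in the `ℂ`-linear span of the values of the
given vector fields.  The leaf equivalence relation is the smallest equivalence relation
containing this relation, and the leaf space is the quotient `Quot` with the quotient
topology. -/
def LeafStepC {E : Type*} [NormedAddCommGroup E] [NormedSpace ℂ E]
    (N : Set E) (Vs : Set (E → E)) (p q : ↥N) : Prop :=
  ∃ γ : ℝ → E, (∀ k ∈ Icc (0:ℝ) 1, γ k ∈ N) ∧ γ 0 = (p : E) ∧ γ 1 = (q : E) ∧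
    ∀ k ∈ Icc (0:ℝ) 1, ∃ d ∈ Submodule.span ℂ ((fun V => V (γ k)) '' Vs),
      HasDerivWithinAt γ d (Icc (0:ℝ) 1) k

theorem lsp_primitive (R : ℝ) (φ : ℂ → ℂ) (hφ : DifferentiableOn ℂ φ {ζ : ℂ | ζ.re < R}) :
    ∃ A : ℂ → ℂ, ∀ ζ : ℂ, ζ.re < R → HasDerivAt A (φ ζ) ζ := by
  have hne : ∀ ξ ∈ ball (0 : ℂ) 1, 1 - ξ ≠ 0 := by
    intro ξ hξ h
    have : ξ = 1 := by linear_combination -h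
    simp [this] at hξ
  have hM : ∀ ξ ∈ ball (0 : ℂ) 1, ((R : ℂ) - (1 + ξ) / (1 - ξ)).re < R := by
    intro ξ hξ
    have h1 := hne ξ hξ
    have h2 : 0 < Complex.normSq (1 - ξ) := Complex.normSq_pos.mpr h1
    have h3 : Complex.normSq ξ < 1 := by
      rw [Complex.normSq_eq_norm_sq]
      have : ‖ξ‖ < 1 := by simpa using hξ
      nlinarith [norm_nonneg ξ]
    have h4 : ((1 + ξ) / (1 - ξ)).re = (1 - Complex.normSq ξ) / Complex.normSq (1 - ξ) := by
      rw [Complex.div_re, ← add_div]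
      congr 1
      simp [Complex.normSq_apply]
      ring
    rw [Complex.sub_re, h4, Complex.ofReal_re]
    have : 0 < (1 - Complex.normSq ξ) / Complex.normSq (1 - ξ) := div_pos (by linarith) h2
    linarith
  have hMd : ∀ ξ ∈ ball (0 : ℂ) 1,
      DifferentiableAt ℂ (fun ξ : ℂ => (R : ℂ) - (1 + ξ) / (1 - ξ)) ξ := by
    intro ξ hξ
    have := hne ξ hξ
    fun_prop (disch := assumption)
  have hd : DifferentiableOn ℂ
      (fun ξ : ℂ => φ ((R : ℂ) - (1 + ξ) / (1 - ξ)) * (-2 / (1 - ξ) ^ 2)) (ball 0 1) := by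
    apply DifferentiableOn.mul
    · exact hφ.comp (fun ξ hξ => (hMd ξ hξ).differentiableWithinAt) (fun ξ hξ => hM ξ hξ)
    · intro ξ hξ
      have := hne ξ hξ
      have h2 : (1 - ξ) ^ 2 ≠ 0 := pow_ne_zero _ this
      apply DifferentiableAt.differentiableWithinAt
      fun_prop (disch := assumption)
  obtain ⟨P, hP⟩ := hd.isExactOn_ball
  refine ⟨fun ζ => P ((R - ζ - 1) / (R - ζ + 1)), fun ζ hζ => ?_⟩
  have hk : (R : ℂ) - ζ + 1 ≠ 0 := by
    intro h
    have := congrArg Complex.re h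
    simp at this
    linarith
  have hmem : ((R : ℂ) - ζ - 1) / (R - ζ + 1) ∈ ball (0 : ℂ) 1 := by
    rw [mem_ball_zero_iff, norm_div, div_lt_one (norm_pos_iff.mpr hk)]
    apply lt_of_pow_lt_pow_left₀ 2 (norm_nonneg _)
    rw [← Complex.normSq_eq_norm_sq, ← Complex.normSq_eq_norm_sq]
    simp [Complex.normSq_apply]
    nlinarith
  have hin : HasDerivAt (fun ζ : ℂ => ((R : ℂ) - ζ - 1) / (R - ζ + 1))
      (((-1) * (R - ζ + 1) - (R - ζ - 1) * (-1)) / (R - ζ + 1) ^ 2) ζ := by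
    apply HasDerivAt.div
    · exact (((hasDerivAt_id ζ).const_sub (R : ℂ)).sub_const 1)
    · exact (((hasDerivAt_id ζ).const_sub (R : ℂ)).add_const 1)
    · exact hk
  have := (hP _ hmem).comp ζ hin
  refine HasDerivAt.congr_deriv this ?_
  have e1 : (1 : ℂ) - ((R : ℂ) - ζ - 1) / (R - ζ + 1) = 2 / (R - ζ + 1) := by
    field_simp; ring
  have e2 : (R : ℂ) - (1 + ((R : ℂ) - ζ - 1) / (R - ζ + 1)) / (2 / (R - ζ + 1)) = ζ := by
    field_simp; ring
  simp only [e1, e2]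
  field_simp
  ring

theorem lsp_period (R : ℝ) (φ A : ℂ → ℂ) (c : ℂ) (hc : c.re = 0)
    (hφ : ∀ ζ, φ (ζ + c) = φ ζ)
    (hA : ∀ ζ : ℂ, ζ.re < R → HasDerivAt A (φ ζ) ζ) :
    ∃ κ : ℂ, ∀ (j : ℤ) (ζ : ℂ), ζ.re < R → A (ζ + j * c) = A ζ + j * κ := by
  have hconv : Convex ℝ {ζ : ℂ | ζ.re < R} := convex_halfSpace_re_lt R
  have key : ∀ ζ : ℂ, ζ.re < R → HasDerivAt (fun ζ => A (ζ + c) - A ζ) 0 ζ := by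
    intro ζ hζ
    have h1 : HasDerivAt A (φ ζ) (ζ + c) := by
      rw [← hφ ζ]; exact hA _ (by simpa [hc] using hζ)
    have := (h1.comp_add_const ζ c).sub (hA ζ hζ)
    rw [sub_self] at this
    exact this
  have hx0 : (((R - 1 : ℝ) : ℂ)).re < R := by simp
  generalize ((R - 1 : ℝ) : ℂ) = w0 at hx0
  refine ⟨A (w0 + c) - A w0, ?_⟩
  have one : ∀ ζ : ℂ, ζ.re < R →
      A (ζ + c) = A ζ + (A (w0 + c) - A w0) := by
    intro ζ hζ
    have := hconv.norm_image_sub_le_of_norm_hasDerivWithin_le (𝕜 := ℂ) (C := 0)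
      (f := fun ζ => A (ζ + c) - A ζ) (f' := fun _ => 0)
      (fun x hx => (key x hx).hasDerivWithinAt) (by simp) hx0 hζ
    simp only [zero_mul] at this
    have := norm_le_zero_iff.mp this
    linear_combination this
  intro j
  induction j using Int.induction_on with
  | zero => intro ζ _; simp
  | succ i ih =>
    intro ζ hζ
    have h1 := ih ζ hζ
    have h2 := one (ζ + i * c) (by simpa [hc] using hζ)
    push_cast at h1 ⊢
    rw [show ζ + ((i : ℂ) + 1) * c = ζ + i * c + c by ring, h2, h1]
    ring
  | pred i ih =>
    intro ζ hζ
    have h1 := ih ζ hζ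
    have h2 := one (ζ + (-i - 1) * c) (by simpa [hc] using hζ)
    push_cast at h1 ⊢
    rw [show ζ + (-(i : ℂ) - 1) * c + c = ζ + -i * c by ring, h1] at h2
    linear_combination -h2

theorem lsp_locconst {α : Type*} (φ : ℝ → α)
    (h : ∀ k ∈ Icc (0:ℝ) 1, ∃ δ > 0, ∀ k' ∈ Icc (0:ℝ) 1 ∩ ball k δ, φ k' = φ k) : φ 0 = φ 1 := by
  have : IsLocallyConstant (fun k : Icc (0:ℝ) 1 => φ k) := by
    rw [IsLocallyConstant.iff_eventually_eq]
    intro k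
    obtain ⟨δ, hδ, H⟩ := h k k.2
    filter_upwards [ball_mem_nhds k hδ] with k' hk'
    exact H k' ⟨k'.2, hk'⟩
  exact this.apply_eq_of_isPreconnected (s := univ) isPreconnected_univ
    (x := ⟨0, by simp⟩) (y := ⟨1, by simp⟩) (mem_univ _) (mem_univ _)

theorem lsp_t2 (v : ℂ × ℂ) : T2Space ((ℂ × ℂ) ⧸ AddSubgroup.zmultiples v) := by
  infer_instance

theorem lsp_logpow {S : Set ℝ} {k : ℝ} {x : ℝ → ℂ} {c : ℂ}
    (h : HasDerivWithinAt x (x k * c) S k) (n : ℕ) :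
    HasDerivWithinAt (fun k => x k ^ n) (x k ^ n * (n * c)) S k := by
  refine (h.fun_pow n).congr_deriv ?_
  rcases n with _ | n
  · simp
  · simp [pow_succ]; ring

theorem lsp_logmono {S : Set ℝ} {k : ℝ} {x y : ℝ → ℂ} {c e : ℂ}
    (hx : HasDerivWithinAt x (x k * c) S k) (hy : HasDerivWithinAt y (y k * e) S k) (n m : ℕ) :
    HasDerivWithinAt (fun k => x k ^ n * y k ^ m)
      (x k ^ n * y k ^ m * (n * c + m * e)) S k := by
  refine ((lsp_logpow hx n).fun_mul (lsp_logpow hy m)).congr_deriv ?_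
  ring

/-- The multivalued first integrals. -/
noncomputable def lspH (a b : ℕ) (ε : ℂ) (A B : ℂ → ℂ) (p : ℂ × ℂ × ℂ × ℂ) (ζ : ℂ) : ℂ × ℂ :=
  ((p.2.2.1 ^ a * p.2.2.2 ^ b)⁻¹ + ε * p.1 + A ζ, p.2.1 - B ζ)

theorem lsp_branch {z z0 : ℂ} (hz : z ≠ 0) (h0 : z0 ≠ 0) :
    Complex.exp (Complex.log z0 + Complex.log (z / z0)) = z := by
  rw [Complex.exp_add, Complex.exp_log h0, Complex.exp_log (div_ne_zero hz h0)]
  field_simp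

theorem lsp_mk (ρ : ℝ) (a b : ℕ) (ε : ℂ) (A B : ℂ → ℂ) (κA κB : ℂ)
    (hA : ∀ (j : ℤ) (ζ : ℂ), ‖Complex.exp ζ‖ < ρ → A (ζ + j * (2 * Real.pi * Complex.I)) = A ζ + j * κA)
    (hB : ∀ (j : ℤ) (ζ : ℂ), ‖Complex.exp ζ‖ < ρ → B (ζ + j * (2 * Real.pi * Complex.I)) = B ζ + j * κB)
    (p : ℂ × ℂ × ℂ × ℂ) (ζ ζ' : ℂ) (h : Complex.exp ζ = Complex.exp ζ')
    (hζ : ‖Complex.exp ζ'‖ < ρ) :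
    (QuotientAddGroup.mk (lspH a b ε A B p ζ) : (ℂ × ℂ) ⧸ AddSubgroup.zmultiples (κA, -κB)) =
      QuotientAddGroup.mk (lspH a b ε A B p ζ') := by
  obtain ⟨j, rfl⟩ := Complex.exp_eq_exp_iff_exists_int.mp h
  symm
  rw [QuotientAddGroup.eq, AddSubgroup.mem_zmultiples_iff]
  refine ⟨j, ?_⟩
  simp only [lspH, hA j ζ' hζ, hB j ζ' hζ]
  ext
  · simp; ring
  · simp

theorem lsp_deriv {S : Set ℝ} {k : ℝ} (a b m n : ℕ) (hm : 0 < m) (ε : ℂ) (hε : ε * ε = 1)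
    (hab : (a : ℂ) * m - b * n = ε)
    (G Fz α β : ℂ) (hG : G ≠ 0) (A B : ℂ → ℂ) (z0 : ℂ) (hz0 : z0 ≠ 0)
    (t s x y : ℝ → ℂ) (hx0 : x k ≠ 0) (hy0 : y k ≠ 0)
    (ht : HasDerivWithinAt t α S k) (hs : HasDerivWithinAt s β S k)
    (hx : HasDerivWithinAt x (α * (x k ^ a * y k ^ b * (m * x k)) +
      β * (G * (x k * (-(b * m) + x k ^ a * y k ^ b * Fz)))) S k)
    (hy : HasDerivWithinAt y (α * (-(x k ^ a * y k ^ b) * (n * y k)) +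
      β * (G * (y k * (a * m - n / m * (x k ^ a * y k ^ b * Fz))))) S k)
    (hsl : (x k ^ n * y k ^ m) / z0 ∈ Complex.slitPlane)
    (hA : HasDerivAt A (Fz / m ^ 2) (Complex.log z0 + Complex.log ((x k ^ n * y k ^ m) / z0)))
    (hB : HasDerivAt B (1 / (ε * m * G)) (Complex.log z0 + Complex.log ((x k ^ n * y k ^ m) / z0))) :
    HasDerivWithinAt (fun k => lspH a b ε A B (t k, s k, x k, y k)
      (Complex.log z0 + Complex.log ((x k ^ n * y k ^ m) / z0))) 0 S k := by
  have hmC : (m : ℂ) ≠ 0 := by exact_mod_cast hm.ne'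
  have hε0 : ε ≠ 0 := by rintro rfl; simp at hε
  set U := x k ^ a * y k ^ b with hU
  have hU0 : U ≠ 0 := mul_ne_zero (pow_ne_zero _ hx0) (pow_ne_zero _ hy0)
  have hZ0 : x k ^ n * y k ^ m ≠ 0 := mul_ne_zero (pow_ne_zero _ hx0) (pow_ne_zero _ hy0)
  have hx' : HasDerivWithinAt x (x k * (α * U * m + β * G * (-(b * m) + U * Fz))) S k := by
    exact hx.congr_deriv (by ring)
  have hy' : HasDerivWithinAt y (y k * (-(α * U * n) + β * G * (a * m - n / m * (U * Fz)))) S k := by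
    exact hy.congr_deriv (by ring)
  have hUd := lsp_logmono hx' hy' a b
  have hZd := lsp_logmono hx' hy' n m
  have eU : (a : ℂ) * (α * U * m + β * G * (-(b * m) + U * Fz)) +
      b * (-(α * U * n) + β * G * (a * m - n / m * (U * Fz))) =
      ε * (α * U + β * G * U * Fz / m) := by
    rw [← hab]; field_simp; ring
  have eZ : (n : ℂ) * (α * U * m + β * G * (-(b * m) + U * Fz)) +
      m * (-(α * U * n) + β * G * (a * m - n / m * (U * Fz))) = ε * m * G * β := by
    rw [← hab]; field_simp; ring
  rw [eU] at hUd
  rw [eZ] at hZd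
  have hζ : HasDerivWithinAt (fun k => Complex.log z0 + Complex.log ((x k ^ n * y k ^ m) / z0))
      (ε * m * G * β) S k := by
    have h1 := hZd.div_const z0
    have := (h1.clog_real hsl).const_add (Complex.log z0)
    refine this.congr_deriv ?_
    field_simp
  have hAd := hA.comp_hasDerivWithinAt k hζ
  have hBd := hB.comp_hasDerivWithinAt k hζ
  have h1 := ((hUd.inv hU0).add (ht.const_mul ε)).add hAd
  have h2 := hs.sub hBd
  have h3 := h1.prodMk h2
  refine h3.congr_deriv ?_
  rw [Prod.zero_eq_mk]
  congr 1
  · rw [← hU]; field_simp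
    ring
  · field_simp; ring

theorem lsp_zmem (m n : ℕ) (hm : 0 < m) (hn : 0 < n) (ρ r' : ℝ) (hr'ρ : r' ^ (n + m) < ρ)
    (x y : ℂ) (h : (0 < ‖x‖ ∧ ‖x‖ < r') ∧ (0 < ‖y‖ ∧ ‖y‖ < r')) :
    x ≠ 0 ∧ y ≠ 0 ∧ x ^ n * y ^ m ≠ 0 ∧ ‖x ^ n * y ^ m‖ < ρ := by
  obtain ⟨⟨h1, h2⟩, h3, h4⟩ := h
  have hx := norm_pos_iff.mp h1
  have hy := norm_pos_iff.mp h3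
  refine ⟨hx, hy, mul_ne_zero (pow_ne_zero _ hx) (pow_ne_zero _ hy), ?_⟩
  refine lt_trans ?_ hr'ρ
  rw [norm_mul, norm_pow, norm_pow, pow_add]
  exact mul_lt_mul'' (pow_lt_pow_left₀ h2 h1.le hn.ne') (pow_lt_pow_left₀ h4 h3.le hm.ne')
    (by positivity) (by positivity)

theorem lsp_convex (L : ℝ) (hL : 0 < L) (u v : ℂ) (hu : ‖Complex.exp u‖ < L)
    (hv : ‖Complex.exp v‖ < L) (k : ℝ) (hk : k ∈ Icc (0:ℝ) 1) :
    ‖Complex.exp (u + k * (v - u))‖ < L := by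
  rw [Complex.norm_exp, ← Real.lt_log_iff_exp_lt hL] at *
  have := (convex_halfSpace_re_lt (Real.log L)).add_smul_sub_mem (x := u) (y := v) hu hv hk
  simpa using this

theorem lsp_span (a b m n : ℕ) (hm : 0 < m) (ε : ℂ) (hε : ε * ε = 1)
    (hab : (a : ℂ) * m - b * n = ε) (U G Fz X Y dξ dη : ℂ) (hU0 : U ≠ 0) (hG0 : G ≠ 0) :
    ((ε * (-(-(U * (a * dξ + b * dη)) / U ^ 2) - Fz / m ^ 2 * (n * dξ + m * dη)),
      1 / (ε * m * G) * (n * dξ + m * dη), X * dξ, Y * dη) : ℂ × ℂ × ℂ × ℂ) ∈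
    Submodule.span ℂ {((1 : ℂ), (0 : ℂ), U * ((m : ℂ) * X), -U * ((n : ℂ) * Y)),
      ((0 : ℂ), (1 : ℂ), G * (X * (-((b : ℂ) * m) + U * Fz)),
        G * (Y * ((a : ℂ) * m - ((n : ℂ) / (m : ℂ)) * (U * Fz))))} := by
  have hmC : (m : ℂ) ≠ 0 := by exact_mod_cast hm.ne'
  have hε0 : ε ≠ 0 := by rintro rfl; simp at hε
  have hεi : ε⁻¹ = ε := by field_simp; linear_combination -hε
  have e1 : ε * (-(-(U * (a * dξ + b * dη)) / U ^ 2) - Fz / m ^ 2 * (n * dξ + m * dη)) =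
      ε * ((a * dξ + b * dη) / U - Fz / m ^ 2 * (n * dξ + m * dη)) := by
    field_simp
  have e2 : 1 / (ε * m * G) * (n * dξ + m * dη) = ε * (n * dξ + m * dη) / (m * G) := by
    nth_rewrite 2 [← hεi]; field_simp
  rw [Submodule.mem_span_pair, e1, e2]
  refine ⟨ε * ((a * dξ + b * dη) / U - Fz / m ^ 2 * (n * dξ + m * dη)),
    ε * (n * dξ + m * dη) / (m * G), ?_⟩
  simp only [Prod.smul_mk, Prod.mk_add_mk, smul_eq_mul, Prod.mk.injEq]
  refine ⟨by ring, by ring, ?_, ?_⟩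
  · field_simp
    linear_combination m * X * dξ * ε * hab + m * X * dξ * hε
  · field_simp
    linear_combination m ^ 2 * Y * dη * ε * hab + m ^ 2 * Y * dη * hε

theorem lsp_path (a b m n : ℕ) (hm : 0 < m) (hn : 0 < n) (ε : ℂ) (hε : ε * ε = 1)
    (hab : (a : ℂ) * m - b * n = ε) (ρ r' : ℝ) (hr' : 0 < r') (hr'ρ : r' ^ (n + m) < ρ)
    (g f A B : ℂ → ℂ) (hgne : ∀ z : ℂ, z ≠ 0 → ‖z‖ < ρ → g z ≠ 0)
    (hA : ∀ ζ : ℂ, ‖Complex.exp ζ‖ < ρ → HasDerivAt A (f (Complex.exp ζ) / m ^ 2) ζ)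
    (hB : ∀ ζ : ℂ, ‖Complex.exp ζ‖ < ρ → HasDerivAt B (1 / (ε * m * g (Complex.exp ζ))) ζ)
    (h1 h2 ξ₀ ξ₁ η₀ η₁ : ℂ) (hξ₀ : ‖Complex.exp ξ₀‖ < r') (hξ₁ : ‖Complex.exp ξ₁‖ < r')
    (hη₀ : ‖Complex.exp η₀‖ < r') (hη₁ : ‖Complex.exp η₁‖ < r') (Γ : ℂ → ℂ → ℂ × ℂ × ℂ × ℂ)
    (hΓ : ∀ ξ η, Γ ξ η = (ε * (h1 - (Complex.exp ξ ^ a * Complex.exp η ^ b)⁻¹ - A (n * ξ + m * η)),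
      h2 + B (n * ξ + m * η), Complex.exp ξ, Complex.exp η))
    (N : Set (ℂ × ℂ × ℂ × ℂ))
    (hN : N = {p | (0 < ‖p.2.2.1‖ ∧ ‖p.2.2.1‖ < r') ∧ (0 < ‖p.2.2.2‖ ∧ ‖p.2.2.2‖ < r')})
    (p q : N) (hp : (p : ℂ × ℂ × ℂ × ℂ) = Γ ξ₀ η₀) (hq : (q : ℂ × ℂ × ℂ × ℂ) = Γ ξ₁ η₁) :
    LeafStepC N
      {fun p : ℂ × ℂ × ℂ × ℂ =>
        ((1 : ℂ), (0 : ℂ),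
          p.2.2.1 ^ a * p.2.2.2 ^ b * ((m : ℂ) * p.2.2.1),
          -(p.2.2.1 ^ a * p.2.2.2 ^ b) * ((n : ℂ) * p.2.2.2)),
       fun p : ℂ × ℂ × ℂ × ℂ =>
        ((0 : ℂ), (1 : ℂ),
          g (p.2.2.1 ^ n * p.2.2.2 ^ m) * (p.2.2.1 *
            (-((b : ℂ) * m) + p.2.2.1 ^ a * p.2.2.2 ^ b * f (p.2.2.1 ^ n * p.2.2.2 ^ m))),
          g (p.2.2.1 ^ n * p.2.2.2 ^ m) * (p.2.2.2 * ((a : ℂ) * m -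
            ((n : ℂ) / (m : ℂ)) * (p.2.2.1 ^ a * p.2.2.2 ^ b * f (p.2.2.1 ^ n * p.2.2.2 ^ m)))))}
      p q := by
  have hmC : (m : ℂ) ≠ 0 := by exact_mod_cast hm.ne'
  have hε0 : ε ≠ 0 := by rintro rfl; simp at hε
  have hmem : ∀ k ∈ Icc (0:ℝ) 1,
      (0 < ‖Complex.exp (ξ₀ + k * (ξ₁ - ξ₀))‖ ∧ ‖Complex.exp (ξ₀ + k * (ξ₁ - ξ₀))‖ < r') ∧
      (0 < ‖Complex.exp (η₀ + k * (η₁ - η₀))‖ ∧ ‖Complex.exp (η₀ + k * (η₁ - η₀))‖ < r') := by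
    intro k hk
    exact ⟨⟨norm_pos_iff.mpr (Complex.exp_ne_zero _), lsp_convex _ hr' _ _ hξ₀ hξ₁ k hk⟩,
      norm_pos_iff.mpr (Complex.exp_ne_zero _), lsp_convex _ hr' _ _ hη₀ hη₁ k hk⟩
  refine ⟨fun k => Γ (ξ₀ + k * (ξ₁ - ξ₀)) (η₀ + k * (η₁ - η₀)), ?_, ?_, ?_, ?_⟩
  · intro k hk
    rw [hN]
    simp only [hΓ]
    exact hmem k hk
  · simp [hp]
  · simp [hq]
  intro k hk
  obtain ⟨-, -, hz0, hzρ⟩ := lsp_zmem m n hm hn ρ r' hr'ρ _ _ (hmem k hk)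
  simp only [image_pair, hΓ]
  set ξ : ℝ → ℂ := fun k => ξ₀ + k * (ξ₁ - ξ₀) with hξ
  set η : ℝ → ℂ := fun k => η₀ + k * (η₁ - η₀) with hη
  set S := Icc (0:ℝ) 1
  have hid : HasDerivWithinAt (fun k : ℝ => (k : ℂ)) 1 S k :=
    (Complex.ofRealCLM.hasDerivAt (x := k)).hasDerivWithinAt
  have hξd : HasDerivWithinAt ξ (ξ₁ - ξ₀) S k := by
    exact ((hid.mul_const (ξ₁ - ξ₀)).const_add ξ₀).congr_deriv (one_mul _)
  have hηd : HasDerivWithinAt η (η₁ - η₀) S k := by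
    exact ((hid.mul_const (η₁ - η₀)).const_add η₀).congr_deriv (one_mul _)
  have hX : HasDerivWithinAt (fun k => Complex.exp (ξ k)) (Complex.exp (ξ k) * (ξ₁ - ξ₀)) S k :=
    hξd.cexp
  have hY : HasDerivWithinAt (fun k => Complex.exp (η k)) (Complex.exp (η k) * (η₁ - η₀)) S k :=
    hηd.cexp
  have hUd := lsp_logmono (x := fun k => Complex.exp (ξ k)) (y := fun k => Complex.exp (η k)) hX hY a b
  have hζd : HasDerivWithinAt (fun k => n * ξ k + m * η k) (n * (ξ₁ - ξ₀) + m * (η₁ - η₀)) S k :=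
    (hξd.const_mul (n : ℂ)).add (hηd.const_mul (m : ℂ))
  have hexp : Complex.exp (n * ξ k + m * η k) = Complex.exp (ξ k) ^ n * Complex.exp (η k) ^ m := by
    rw [Complex.exp_add, Complex.exp_nat_mul, Complex.exp_nat_mul]
  have hzρ' : ‖Complex.exp (n * ξ k + m * η k)‖ < ρ := by rw [hexp]; exact hzρ
  have hG0 : g (Complex.exp (ξ k) ^ n * Complex.exp (η k) ^ m) ≠ 0 := hgne _ hz0 hzρ
  have hAd := (hA _ hzρ').comp_hasDerivWithinAt k hζd
  have hBd := (hB _ hzρ').comp_hasDerivWithinAt k hζd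
  rw [hexp] at hAd hBd
  have hX0 : Complex.exp (ξ k) ≠ 0 := Complex.exp_ne_zero _
  have hY0 : Complex.exp (η k) ≠ 0 := Complex.exp_ne_zero _
  have hU0 : Complex.exp (ξ k) ^ a * Complex.exp (η k) ^ b ≠ 0 :=
    mul_ne_zero (pow_ne_zero _ hX0) (pow_ne_zero _ hY0)
  have hT := ((((hUd.inv hU0).const_sub h1).sub hAd).const_mul ε)
  have hS := hBd.const_add h2
  have hall := hT.prodMk (hS.prodMk (hX.prodMk hY))
  refine ⟨_, ?_, hall⟩
  exact lsp_span a b m n hm ε hε hab _ _ _ _ _ _ _ hU0 hG0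

theorem lsp_quot {X Y : Type*} [TopologicalSpace X] [TopologicalSpace Y] [T2Space Y]
    (rel : X → X → Prop) (Φ : X → Y) (hc : Continuous Φ)
    (h1 : ∀ p q, rel p q → Φ p = Φ q) (h2 : ∀ p q, Φ p = Φ q → rel p q) :
    T2Space (Quot rel) := by
  refine T2Space.of_injective_continuous (f := Quot.lift Φ h1) ?_ (continuous_quot_lift h1 hc)
  intro p q
  induction p using Quot.ind
  induction q using Quot.ind
  exact fun h => Quot.sound (h2 _ _ h)

theorem lsp_const {S : Set ℝ} (hS : Convex ℝ S) (F : ℝ → ℂ × ℂ)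
    (h : ∀ k ∈ S, HasDerivWithinAt F 0 S k) (k k' : ℝ) (hk : k ∈ S) (hk' : k' ∈ S) :
    F k' = F k := by
  have := hS.norm_image_sub_le_of_norm_hasDerivWithin_le (𝕜 := ℝ) (C := 0)
    (f := F) (f' := fun _ => 0) h (by simp) hk hk'
  rw [zero_mul] at this
  exact sub_eq_zero.mp (norm_le_zero_iff.mp this)

/-- **Proposition 4.1.**
The leaf space of the foliation spanned by `X̄ = ∂/∂t + X` and `Ȳ = ∂/∂s + Y` over the
stratum `S_{x,y} = ℂ² × {0 < |x| < r', 0 < |y| < r'}` is Hausdorff. -/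
theorem leaf_space_over_Sxy_hausdorff
    (a b m n : ℕ) (ha : 0 < a) (hb : 0 < b) (hm : 0 < m) (hn : 0 < n)
    (hab : (a * m : ℤ) - (b * n : ℤ) = 1 ∨ (a * m : ℤ) - (b * n : ℤ) = -1)
    (ρ : ℝ) (hρ : 0 < ρ) (g f : ℂ → ℂ)
    (hg : DifferentiableOn ℂ g (ball (0 : ℂ) ρ \ {0}))
    (hgne : ∀ z ∈ ball (0 : ℂ) ρ \ {0}, g z ≠ 0)
    (hf : DifferentiableOn ℂ f (ball (0 : ℂ) ρ \ {0}))
    (r : ℕ) (F₁ : ℂ → ℂ) (hF₁ : DifferentiableOn ℂ F₁ (ball (0 : ℂ) ρ))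
    (hF₁f : ∀ z ∈ ball (0 : ℂ) ρ \ {0}, F₁ z = z ^ r * f z)
    (r' : ℝ) (hr' : 0 < r') (hr'ρ : r' ^ (n + m) < ρ) :
    T2Space (Quot (LeafStepC
      {p : ℂ × ℂ × ℂ × ℂ | (0 < ‖p.2.2.1‖ ∧ ‖p.2.2.1‖ < r') ∧ (0 < ‖p.2.2.2‖ ∧ ‖p.2.2.2‖ < r')}
      {fun p : ℂ × ℂ × ℂ × ℂ =>
        ((1 : ℂ), (0 : ℂ),
          p.2.2.1 ^ a * p.2.2.2 ^ b * ((m : ℂ) * p.2.2.1),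
          -(p.2.2.1 ^ a * p.2.2.2 ^ b) * ((n : ℂ) * p.2.2.2)),
       fun p : ℂ × ℂ × ℂ × ℂ =>
        ((0 : ℂ), (1 : ℂ),
          g (p.2.2.1 ^ n * p.2.2.2 ^ m) * (p.2.2.1 *
            (-((b : ℂ) * m) + p.2.2.1 ^ a * p.2.2.2 ^ b * f (p.2.2.1 ^ n * p.2.2.2 ^ m))),
          g (p.2.2.1 ^ n * p.2.2.2 ^ m) * (p.2.2.2 * ((a : ℂ) * m -
            ((n : ℂ) / (m : ℂ)) * (p.2.2.1 ^ a * p.2.2.2 ^ b * f (p.2.2.1 ^ n * p.2.2.2 ^ m)))))})) := by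
  have hmC : (m : ℂ) ≠ 0 := by exact_mod_cast hm.ne'
  obtain ⟨e, he, heab⟩ : ∃ e : ℤ, e * e = 1 ∧ (a * m : ℤ) - (b * n : ℤ) = e := by
    rcases hab with h | h
    · exact ⟨1, by norm_num, h⟩
    · exact ⟨-1, by norm_num, h⟩
  have hε : (e : ℂ) * e = 1 := by exact_mod_cast he
  have habε : (a : ℂ) * m - b * n = e := by exact_mod_cast heab
  have hε0 : (e : ℂ) ≠ 0 := by intro h; simp [h] at hε
  have hexpS : ∀ ζ : ℂ, ζ.re < Real.log ρ ↔ ‖Complex.exp ζ‖ < ρ := by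
    intro ζ
    rw [Complex.norm_exp, Real.lt_log_iff_exp_lt hρ]
  have hmaps : MapsTo Complex.exp {ζ : ℂ | ζ.re < Real.log ρ} (ball (0 : ℂ) ρ \ {0}) := by
    intro ζ hζ
    exact ⟨by simpa using (hexpS ζ).mp hζ, by simp⟩
  obtain ⟨A, hA⟩ := lsp_primitive (Real.log ρ) (fun ζ => f (Complex.exp ζ) / m ^ 2)
    ((hf.comp Complex.differentiable_exp.differentiableOn hmaps).div_const _)
  have hgexp : DifferentiableOn ℂ (fun ζ => g (Complex.exp ζ)) {ζ : ℂ | ζ.re < Real.log ρ} :=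
    hg.comp Complex.differentiable_exp.differentiableOn hmaps
  obtain ⟨B, hB⟩ := lsp_primitive (Real.log ρ) (fun ζ => 1 / (e * m * g (Complex.exp ζ)))
    ((differentiableOn_const _).div (hgexp.const_mul _)
      (fun ζ hζ => mul_ne_zero (mul_ne_zero hε0 hmC) (hgne _ (hmaps hζ))))
  have hcre : (2 * Real.pi * Complex.I).re = 0 := by simp
  obtain ⟨κA, hκA⟩ := lsp_period _ _ A (2 * Real.pi * Complex.I) hcre
    (fun ζ => by rw [Complex.exp_periodic ζ]) hA
  obtain ⟨κB, hκB⟩ := lsp_period _ _ B (2 * Real.pi * Complex.I) hcre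
    (fun ζ => by rw [Complex.exp_periodic ζ]) hB
  simp only [hexpS] at hA hB hκA hκB
  have hmk := lsp_mk ρ a b e A B κA κB hκA hκB
  have hgne' : ∀ z : ℂ, z ≠ 0 → ‖z‖ < ρ → g z ≠ 0 :=
    fun z h0 h1 => hgne z ⟨by simpa using h1, h0⟩
  have hzm := lsp_zmem m n hm hn ρ r' hr'ρ
  have hbr : ∀ (p : ℂ × ℂ × ℂ × ℂ) (z0 : ℂ), z0 ≠ 0 →
      (0 < ‖p.2.2.1‖ ∧ ‖p.2.2.1‖ < r') ∧ (0 < ‖p.2.2.2‖ ∧ ‖p.2.2.2‖ < r') →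
      (QuotientAddGroup.mk (lspH a b e A B p (Complex.log (p.2.2.1 ^ n * p.2.2.2 ^ m))) :
        (ℂ × ℂ) ⧸ AddSubgroup.zmultiples (κA, -κB)) =
      QuotientAddGroup.mk (lspH a b e A B p
        (Complex.log z0 + Complex.log ((p.2.2.1 ^ n * p.2.2.2 ^ m) / z0))) := by
    intro p z0 hz0 hp
    obtain ⟨-, -, h3, h4⟩ := hzm _ _ hp
    apply hmk
    · rw [lsp_branch h3 hz0, Complex.exp_log h3]
    · rw [lsp_branch h3 hz0]; exact h4
  have := lsp_t2 (κA, -κB)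
  refine lsp_quot (Y := (ℂ × ℂ) ⧸ AddSubgroup.zmultiples (κA, -κB)) _
    (fun p => QuotientAddGroup.mk (lspH a b e A B p.1
      (Complex.log (p.1.2.2.1 ^ n * p.1.2.2.2 ^ m)))) ?_ ?_ ?_
  · -- continuity
    rw [continuous_iff_continuousAt]
    intro p0
    obtain ⟨h1, h2, h3, h4⟩ := hzm _ _ p0.2
    have hfun := funext fun p : {p : ℂ × ℂ × ℂ × ℂ | (0 < ‖p.2.2.1‖ ∧ ‖p.2.2.1‖ < r') ∧
      (0 < ‖p.2.2.2‖ ∧ ‖p.2.2.2‖ < r')} => hbr p.1 _ h3 p.2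
    rw [hfun]
    refine (continuous_quotient_mk'.continuousAt).comp ?_
    set z0 := p0.1.2.2.1 ^ n * p0.1.2.2.2 ^ m with hz0
    have hζc : ContinuousAt (fun p : {p : ℂ × ℂ × ℂ × ℂ | (0 < ‖p.2.2.1‖ ∧ ‖p.2.2.1‖ < r') ∧
      (0 < ‖p.2.2.2‖ ∧ ‖p.2.2.2‖ < r')} =>
        Complex.log z0 + Complex.log ((p.1.2.2.1 ^ n * p.1.2.2.2 ^ m) / z0)) p0 := by
      refine continuousAt_const.add (ContinuousAt.clog ?_ ?_)
      · exact Continuous.continuousAt (by fun_prop)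
      · rw [← hz0, div_self h3]; exact Complex.one_mem_slitPlane
    have hn4 : ‖Complex.exp (Complex.log z0 +
        Complex.log ((p0.1.2.2.1 ^ n * p0.1.2.2.2 ^ m) / z0))‖ < ρ := by
      rw [lsp_branch h3 h3]; exact h4
    have hAc := ContinuousAt.comp (f := fun p : {p : ℂ × ℂ × ℂ × ℂ |
      (0 < ‖p.2.2.1‖ ∧ ‖p.2.2.1‖ < r') ∧ (0 < ‖p.2.2.2‖ ∧ ‖p.2.2.2‖ < r')} =>
        Complex.log z0 + Complex.log ((p.1.2.2.1 ^ n * p.1.2.2.2 ^ m) / z0))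
        (hA _ hn4).continuousAt hζc
    have hBc := ContinuousAt.comp (f := fun p : {p : ℂ × ℂ × ℂ × ℂ |
      (0 < ‖p.2.2.1‖ ∧ ‖p.2.2.1‖ < r') ∧ (0 < ‖p.2.2.2‖ ∧ ‖p.2.2.2‖ < r')} =>
        Complex.log z0 + Complex.log ((p.1.2.2.1 ^ n * p.1.2.2.2 ^ m) / z0))
        (hB _ hn4).continuousAt hζc
    refine ContinuousAt.prodMk (ContinuousAt.add (ContinuousAt.add ?_ ?_) hAc)
      (ContinuousAt.sub ?_ hBc)
    · refine ContinuousAt.inv₀ (Continuous.continuousAt (by fun_prop)) ?_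
      exact mul_ne_zero (pow_ne_zero _ h1) (pow_ne_zero _ h2)
    · exact Continuous.continuousAt (by fun_prop)
    · exact Continuous.continuousAt (by fun_prop)
  · -- invariance
    rintro p q ⟨γ, hγN, hγ0, hγ1, hγd⟩
    simp only [← hγ0, ← hγ1]
    refine lsp_locconst (fun k => (QuotientAddGroup.mk (lspH a b e A B (γ k)
      (Complex.log ((γ k).2.2.1 ^ n * (γ k).2.2.2 ^ m))) :
        (ℂ × ℂ) ⧸ AddSubgroup.zmultiples (κA, -κB))) ?_
    intro k0 hk0
    obtain ⟨h1, h2, h3, h4⟩ := hzm _ _ (hγN k0 hk0)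
    set z0 := (γ k0).2.2.1 ^ n * (γ k0).2.2.2 ^ m with hz0
    have hγc : ContinuousWithinAt γ (Icc 0 1) k0 := by
      obtain ⟨d, -, hd⟩ := hγd k0 hk0
      exact hd.continuousWithinAt
    have hqc : ContinuousWithinAt (fun k => ((γ k).2.2.1 ^ n * (γ k).2.2.2 ^ m) / z0)
        (Icc 0 1) k0 := by
      have : Continuous (fun p : ℂ × ℂ × ℂ × ℂ => (p.2.2.1 ^ n * p.2.2.2 ^ m) / z0) := by fun_prop
      exact this.continuousAt.comp_continuousWithinAt hγc
    have hev := hqc.preimage_mem_nhdsWithin (Complex.isOpen_slitPlane.mem_nhds (by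
      show _ / z0 ∈ _
      rw [← hz0, div_self h3]; exact Complex.one_mem_slitPlane))
    obtain ⟨δ, hδ, hsub⟩ := Metric.mem_nhdsWithin_iff.mp hev
    refine ⟨δ, hδ, fun k' hk' => ?_⟩
    have hloc := lsp_const ((convex_Icc (0:ℝ) 1).inter (convex_ball k0 δ))
      (fun k => lspH a b e A B (γ k)
        (Complex.log z0 + Complex.log (((γ k).2.2.1 ^ n * (γ k).2.2.2 ^ m) / z0))) ?_ k0 k'
      ⟨hk0, mem_ball_self hδ⟩ hk'
    · beta_reduce
      rw [hbr _ z0 h3 (hγN k' hk'.1), hbr _ z0 h3 (hγN k0 hk0)]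
      exact congrArg _ hloc
    intro k hk
    obtain ⟨x0, y0, hzk, hzkρ⟩ := hzm _ _ (hγN k hk.1)
    obtain ⟨d, hdm, hd⟩ := hγd k hk.1
    have hd' := hd.mono (inter_subset_left (t := ball k0 δ))
    rw [image_pair, Submodule.mem_span_pair] at hdm
    obtain ⟨α, β, rfl⟩ := hdm
    have d1 := (ContinuousLinearMap.fst ℝ ℂ (ℂ × ℂ × ℂ)).hasFDerivAt.comp_hasDerivWithinAt k hd'
    have d2 := (ContinuousLinearMap.snd ℝ ℂ (ℂ × ℂ × ℂ)).hasFDerivAt.comp_hasDerivWithinAt k hd'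
    have d3 := (ContinuousLinearMap.fst ℝ ℂ (ℂ × ℂ)).hasFDerivAt.comp_hasDerivWithinAt k d2
    have d4 := (ContinuousLinearMap.snd ℝ ℂ (ℂ × ℂ)).hasFDerivAt.comp_hasDerivWithinAt k d2
    have d5 := (ContinuousLinearMap.fst ℝ ℂ ℂ).hasFDerivAt.comp_hasDerivWithinAt k d4
    have d6 := (ContinuousLinearMap.snd ℝ ℂ ℂ).hasFDerivAt.comp_hasDerivWithinAt k d4
    have hexpk := lsp_branch hzk h3
    have hn4 : ‖Complex.exp (Complex.log z0 +
        Complex.log (((γ k).2.2.1 ^ n * (γ k).2.2.2 ^ m) / z0))‖ < ρ := by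
      rw [hexpk]; exact hzkρ
    have hAk := hA _ hn4
    have hBk := hB _ hn4
    rw [hexpk] at hAk hBk
    exact lsp_deriv a b m n hm e hε habε _ _ α β (hgne' _ hzk hzkρ) A B z0 h3
      (fun k => (γ k).1) (fun k => (γ k).2.1) (fun k => (γ k).2.2.1) (fun k => (γ k).2.2.2) x0 y0
      (d1.congr_deriv (by simp)) (d3.congr_deriv (by simp))
      d5 d6 (hsub ⟨hk.2, hk.1⟩) hAk hBk
  · -- connecting path
    rintro ⟨⟨t, s, x, y⟩, hp⟩ ⟨⟨t', s', x', y'⟩, hq⟩ h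
    obtain ⟨hx, hy, hz, hzρ⟩ := hzm _ _ hp
    obtain ⟨hx', hy', hz', hzρ'⟩ := hzm _ _ hq
    dsimp only at hp hq h hx hy hz hzρ hx' hy' hz' hzρ'
    have hex : ∀ x y : ℂ, x ≠ 0 → y ≠ 0 →
        Complex.exp (n * Complex.log x + m * Complex.log y) = x ^ n * y ^ m := by
      intro x y hx hy
      rw [Complex.exp_add, Complex.exp_nat_mul, Complex.exp_nat_mul, Complex.exp_log hx,
        Complex.exp_log hy]
    rw [hmk _ (Complex.log (x ^ n * y ^ m)) (n * Complex.log x + m * Complex.log y) (by rw [hex x y hx hy, Complex.exp_log hz])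
        (by rw [hex x y hx hy]; exact hzρ),
      hmk _ (Complex.log (x' ^ n * y' ^ m)) (n * Complex.log x' + m * Complex.log y')
        (by rw [hex x' y' hx' hy', Complex.exp_log hz'])
        (by rw [hex x' y' hx' hy']; exact hzρ'),
      QuotientAddGroup.eq, AddSubgroup.mem_zmultiples_iff] at h
    obtain ⟨j, hj⟩ := h
    have hj1 := congrArg Prod.fst hj
    have hj2 := congrArg Prod.snd hj
    simp only [lspH, Prod.smul_mk, Prod.neg_mk, Prod.mk_add_mk, zsmul_eq_mul] at hj1 hj2
    have hzρ'' : ‖Complex.exp (n * Complex.log x' + m * Complex.log y')‖ < ρ := by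
      rw [hex x' y' hx' hy']; exact hzρ'
    have hA1 := hκA (-j) _ hzρ''
    have hB1 := hκB (-j) _ hzρ''
    have hE1 : Complex.exp (Complex.log x' + ((e * b * j : ℤ) : ℂ) * (2 * Real.pi * Complex.I)) = x' := by
      rw [Complex.exp_periodic.int_mul, Complex.exp_log hx']
    have hE2 : Complex.exp (Complex.log y' + ((-(e * a * j) : ℤ) : ℂ) * (2 * Real.pi * Complex.I)) = y' := by
      rw [Complex.exp_periodic.int_mul, Complex.exp_log hy']
    have hζ1 : n * (Complex.log x' + ((e * b * j : ℤ) : ℂ) * (2 * Real.pi * Complex.I)) +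
        m * (Complex.log y' + ((-(e * a * j) : ℤ) : ℂ) * (2 * Real.pi * Complex.I)) =
        n * Complex.log x' + m * Complex.log y' + ((-j : ℤ) : ℂ) * (2 * Real.pi * Complex.I) := by
      push_cast
      linear_combination (-(e * j * (2 * Real.pi * Complex.I))) * habε
        - (j * (2 * Real.pi * Complex.I)) * hε
    refine lsp_path a b m n hm hn e hε habε ρ r' hr' hr'ρ g f A B hgne' hA hB
      ((x ^ a * y ^ b)⁻¹ + e * t + A (n * Complex.log x + m * Complex.log y))
      (s - B (n * Complex.log x + m * Complex.log y))
      (Complex.log x) (Complex.log x' + ((e * b * j : ℤ) : ℂ) * (2 * Real.pi * Complex.I))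
      (Complex.log y) (Complex.log y' + ((-(e * a * j) : ℤ) : ℂ) * (2 * Real.pi * Complex.I))
      ?_ ?_ ?_ ?_ _ (fun ξ η => rfl) _ rfl _ _ ?_ ?_
    · rw [Complex.exp_log hx]; exact hp.1.2
    · rw [hE1]; exact hq.1.2
    · rw [Complex.exp_log hy]; exact hp.2.2
    · rw [hE2]; exact hq.2.2
    · simp only [Complex.exp_log hx, Complex.exp_log hy, Prod.mk.injEq, and_true]
      constructor
      · linear_combination -t * hε
      · ring
    · simp only [hE1, hE2, hζ1, hA1, hB1, Prod.mk.injEq, and_true]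
      push_cast
      constructor
      · linear_combination -t' * hε - e * hj1
      · linear_combination -hj2
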